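/- Let G be a finite abelian group. Then there is an isomorphism of abelian groups Hmg(G)/Coc(G) ≅ ⊕_{p | |G|} (Hmg(G_p)/Coc(G_p))^{q(G/G_p)}, where the sum runs over primes p dividing the order of G, G_p is the p-Sylow subgroup of G, q(G/G_p) is the number of cyclic subgroups of G/G_p, and the exponent denotes a direct sum of q(G/G_p) copies. -/

import Mathlib

open scoped DirectSum

noncomputable section

/-- `ℚ/ℤ`, the quotient of the rationals by the integers. -/
abbrev QZ : Type := AddCircle (1 : ℚ)

/-- The group of homogeneous functions of degree `d` from `G` to `H`, i.e. functions `f` with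
`f (n • x) = n ^ d • f x` for every `x : G` and every integer `n` coprime to the order of `x`,
as an additive subgroup of `G → H` under pointwise addition. -/
def Hmg (d : ℕ) (G H : Type*) [AddCommGroup G] [AddCommGroup H] : AddSubgroup (G → H) where
  carrier := {f | ∀ (x : G) (n : ℤ), IsCoprime n (addOrderOf x : ℤ) → f (n • x) = n ^ d • f x}
  zero_mem' := by intro x n _; simp
  add_mem' := by
    intro f g hf hg x n h
    simp only [Pi.add_apply, hf x n h, hg x n h, smul_add]
  neg_mem' := by
    intro f hf x n h
    simp only [Pi.neg_apply, hf x n h, smul_neg]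

/-- The `p`-primary component (the Sylow `p`-subgroup, for `p` prime and `G` finite)
of an abelian group `G`: the elements killed by a power of `p`. -/
def primaryPart (p : ℕ) (G : Type*) [AddCommGroup G] : AddSubgroup G where
  carrier := {x | ∃ n : ℕ, p ^ n • x = 0}
  zero_mem' := ⟨0, by simp⟩
  add_mem' := by
    rintro a b ⟨m, hm⟩ ⟨n, hn⟩
    refine ⟨m + n, ?_⟩
    have ha : p ^ (m + n) • a = 0 := by rw [pow_add, mul_comm, mul_smul, hm, smul_zero]
    have hb : p ^ (m + n) • b = 0 := by rw [pow_add, mul_smul, hn, smul_zero]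
    rw [smul_add, ha, hb, add_zero]
  neg_mem' := by
    rintro a ⟨m, hm⟩
    exact ⟨m, by rw [smul_neg, hm, neg_zero]⟩

/-- The number of cyclic subgroups of an abelian group `A`. -/
def numCyclic (A : Type*) [AddGroup A] : ℕ :=
  Nat.card {C : AddSubgroup A // IsAddCyclic C}

/-- The homogeneous function of degree one induced by a character `φ` of a subgroup `K`:
it agrees with `φ` on `K` and vanishes off `K`. -/
def cocFun {G : Type*} [AddCommGroup G] (K : AddSubgroup G) (φ : K →+ QZ) : G → QZ :=
  fun g =>
    letI := Classical.dec (g ∈ K)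
    if h : g ∈ K then φ ⟨g, h⟩ else 0

/-- `Coc G`: the subgroup of `Hmg(G) = Hmg 1 G (ℚ/ℤ)` generated by the cocyclic functions,
i.e. the functions `φ_K` for `K` a cocyclic subgroup (one with `G/K` cyclic) and `φ` a
character of `K`. -/
def Coc (G : Type*) [AddCommGroup G] : AddSubgroup (Hmg 1 G QZ) :=
  AddSubgroup.closure
    {f | ∃ K : AddSubgroup G, IsAddCyclic (G ⧸ K) ∧ ∃ φ : K →+ QZ, (f : G → QZ) = cocFun K φ}

/-!
Multiplication by a suitable integer `e` projects `G` onto its Sylow subgroup `P = G_p`, so that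
`G ≅ P × G/P`, and multiplication by `e a + (1 - e) b` acts as `a` on the first factor and as `b`
on the second. The `p`-part `e • f` of a homogeneous function `f` on `G` may thus be scaled in each
factor separately: it amounts to an arbitrary choice of a homogeneous function on `P` for every
cyclic subgroup of `G/P`, and the `p`-parts of `f` add up to `f`.

A cocyclic function on `G` plainly restricts to cocyclic functions on `P`. For the converse one must
see that a cocyclic function on `P`, spread over the generators of one cyclic subgroup `C` of
`V = G/P`, lies in `Coc(G)`. This is clear if the generators of `C` are replaced by a cocyclic
subgroup of `V`. By orthogonality of characters and Möbius inversion, `|V|` times the indicator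
function of the generators of `C` is an integer combination of indicator functions of cocyclic
subgroups, and `|V|` is invertible on `P`.
-/

/-! ### Cyclic subgroups -/

section CyclicSubgroups

/-- The cyclic subgroups of `A`, ordered by inclusion. -/
abbrev CyclicSubgroup (A : Type*) [AddGroup A] : Type _ :=
  {C : AddSubgroup A // IsAddCyclic C}

/-- The cyclic subgroup generated by an element. Homogeneous functions of degree zero are exactly
the functions that factor through this map. -/
def cyclicSpan {A : Type*} [AddGroup A] (x : A) : CyclicSubgroup A :=
  ⟨AddSubgroup.zmultiples x, inferInstance⟩

variable {A : Type*}

theorem cyclicSpan_le_iff [AddGroup A] {x : A} {C : CyclicSubgroup A} :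
    cyclicSpan x ≤ C ↔ x ∈ C.1 :=
  AddSubgroup.zmultiples_le

theorem cyclicSpan_surjective [AddGroup A] :
    Function.Surjective (cyclicSpan : A → CyclicSubgroup A) := by
  rintro ⟨C, hC⟩
  obtain ⟨x, rfl⟩ := C.isAddCyclic_iff_exists_zmultiples_eq_top.mp hC
  exact ⟨x, rfl⟩

/-- A chosen generator of a cyclic subgroup. -/
def CyclicSubgroup.generator [AddGroup A] : CyclicSubgroup A → A :=
  Function.surjInv cyclicSpan_surjective

theorem cyclicSpan_generator [AddGroup A] (C : CyclicSubgroup A) : cyclicSpan C.generator = C :=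
  Function.surjInv_eq cyclicSpan_surjective C

theorem mem_of_isCoprime_zsmul_mem [AddCommGroup A] (B : AddSubgroup A) {m n : ℤ} {x : A}
    (h : IsCoprime m n) (hm : m • x ∈ B) (hn : n • x ∈ B) : x ∈ B := by
  obtain ⟨a, b, hab⟩ := h
  rw [← one_zsmul x, ← hab, add_zsmul, mul_zsmul, mul_zsmul]
  exact add_mem (B.zsmul_mem hm a) (B.zsmul_mem hn b)

theorem cyclicSpan_zsmul [AddCommGroup A] {x : A} {n : ℤ}
    (h : IsCoprime n (addOrderOf x : ℤ)) : cyclicSpan (n • x) = cyclicSpan x := by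
  refine le_antisymm (cyclicSpan_le_iff.mpr ⟨n, rfl⟩) (cyclicSpan_le_iff.mpr ?_)
  refine mem_of_isCoprime_zsmul_mem _ h (AddSubgroup.mem_zmultiples _) ?_
  rw [natCast_zsmul, addOrderOf_nsmul_eq_zero]
  exact zero_mem _

theorem exists_zsmul_of_cyclicSpan_eq [AddCommGroup A] {x y : A}
    (h : cyclicSpan y = cyclicSpan x) : ∃ n : ℤ, IsCoprime n (addOrderOf x : ℤ) ∧ n • x = y := by
  obtain ⟨n, hn⟩ := cyclicSpan_le_iff.mp h.le
  obtain ⟨m, hm⟩ := cyclicSpan_le_iff.mp h.ge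
  obtain ⟨k, hk⟩ : (addOrderOf x : ℤ) ∣ 1 - m * n := by
    rw [addOrderOf_dvd_iff_zsmul_eq_zero, sub_zsmul, mul_zsmul]
    simp_all
  exact ⟨n, ⟨m, k, by linear_combination -hk⟩, hn⟩

theorem isCoprime_addOrderOf_of_zsmul_eq [AddCommGroup A] {x : A} {m n : ℤ}
    (hm : IsCoprime m (addOrderOf x : ℤ)) (h : n • x = m • x) :
    IsCoprime n (addOrderOf x : ℤ) := by
  obtain ⟨k, hk⟩ : (addOrderOf x : ℤ) ∣ n - m := by
    rw [addOrderOf_dvd_iff_zsmul_eq_zero, sub_smul, h, sub_self]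
  rw [sub_eq_iff_eq_add'.mp hk]
  exact hm.add_mul_left_left k

theorem isCoprime_addOrderOf_map {B : Type*} [AddGroup A] [AddGroup B] (φ : A →+ B) {x : A}
    {n : ℤ} (h : IsCoprime n (addOrderOf x : ℤ)) : IsCoprime n (addOrderOf (φ x) : ℤ) :=
  h.of_isCoprime_of_dvd_right (Int.natCast_dvd_natCast.mpr (addOrderOf_map_dvd φ x))

theorem isAddCyclic_quotient_ker [AddGroup A] {C : Type*} [AddGroup C] [IsAddCyclic C]
    (φ : A →+ C) : IsAddCyclic (A ⧸ φ.ker) :=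
  isAddCyclic_of_injective _ (QuotientAddGroup.kerLift_injective φ)

theorem isAddCyclic_quotient_ker_toAddMonoidHom [AddCommGroup A] [Finite A] {R : Type*} [CommRing R]
    [IsDomain R] (χ : AddChar A R) : IsAddCyclic (A ⧸ χ.toAddMonoidHom.ker) := by
  let f := QuotientAddGroup.lift χ.toAddMonoidHom.ker χ.toAddMonoidHom fun _ h => h
  have hf : Function.Injective f := by
    refine (injective_iff_map_eq_zero f).mpr fun a ha => ?_
    obtain ⟨a, rfl⟩ := QuotientAddGroup.mk_surjective a
    exact (QuotientAddGroup.eq_zero_iff a).mpr ha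
  exact isCyclic_multiplicative_iff.mp
    (isCyclic_of_injective_ringHom (AddMonoidHom.toMultiplicativeLeft f) hf)

theorem isCoprime_natCard_of_zsmul_eq_zero [AddCommGroup A] [Finite A] {m n : ℤ}
    (h : IsCoprime m n) (hm : ∀ x : A, m • x = 0) : IsCoprime (Nat.card A : ℤ) n := by
  have hdvd := card_dvd_exponent_nsmul_rank' A fun x => natAbs_nsmul_eq_zero.mpr (hm x)
  rw [Int.isCoprime_iff_nat_coprime] at h ⊢
  exact (h.pow_left _).coprime_dvd_left hdvd

/-! ### Möbius inversion and Fourier analysis on cyclic subgroups -/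

theorem forall_mem_of_forall_sum_le_mem {α M : Type*} [PartialOrder α] [Fintype α]
    [DecidableLE α] [AddCommGroup M] {N : AddSubgroup M} {g : α → M}
    (h : ∀ a, ∑ b with b ≤ a, g b ∈ N) (a : α) : g a ∈ N := by
  classical
  induction a using WellFoundedLT.induction with
  | ind a ih =>
    have hsum := h a
    rw [← Finset.sum_erase_add (a := a) _ _ (by simp)] at hsum
    refine (N.add_mem_cancel_left (sum_mem fun b hb => ih b ?_)).mp hsum
    simp only [Finset.mem_erase, Finset.mem_filter] at hb
    exact lt_of_le_of_ne hb.2.2 hb.1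

open scoped Classical in
theorem sum_mem_of_forall_sum_zmultiples_mem {M : Type*} [AddGroup A] [Fintype A]
    [AddCommGroup M] {N : AddSubgroup M} {w : A → M}
    (h : ∀ x, ∑ y with y ∈ AddSubgroup.zmultiples x, w y ∈ N) : ∑ x, w x ∈ N := by
  have := Fintype.ofFinite (CyclicSubgroup A)
  rw [← Finset.sum_fiberwise _ cyclicSpan]
  refine sum_mem fun C _ => forall_mem_of_forall_sum_le_mem
    (g := fun C : CyclicSubgroup A => ∑ x with cyclicSpan x = C, w x) (fun D => ?_) C
  obtain ⟨x, rfl⟩ := cyclicSpan_surjective D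
  rw [Finset.sum_fiberwise_eq_sum_filter]
  simp only [Finset.mem_filter_univ, cyclicSpan_le_iff]
  exact h x

open scoped Classical in
theorem sum_zmultiples_addChar_apply [AddCommGroup A] [Finite A] (χ : AddChar A ℂ) (a : A) :
    ∑ ψ with ψ ∈ AddSubgroup.zmultiples χ, ψ a =
      if χ a = 1 then (Nat.card (AddSubgroup.zmultiples χ) : ℂ) else 0 := by
  let ev : AddChar (AddSubgroup.zmultiples χ) ℂ :=
    (AddChar.doubleDualEmb a).compAddMonoidHom (AddSubgroup.zmultiples χ).subtype
  have hev : ev = 0 ↔ χ a = 1 := by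
    refine ⟨fun h => DFunLike.congr_fun h ⟨χ, AddSubgroup.mem_zmultiples χ⟩, fun h => ?_⟩
    ext ⟨ψ, n, rfl⟩
    simp [ev, AddChar.zsmul_apply, h]
  rw [Finset.sum_subtype (p := (· ∈ AddSubgroup.zmultiples χ)) _ fun _ => Finset.mem_filter_univ _,
    Nat.card_eq_fintype_card, ← if_congr hev rfl rfl]
  exact ev.sum_eq_ite

section Fourier

variable {V : Type*} [AddCommGroup V]

open scoped Classical in
/-- The indicator function of a subgroup `K`, as a function on cyclic subgroups. -/
def subgroupIndicator (K : AddSubgroup V) : CyclicSubgroup V → ℤ :=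
  fun C => if C.1 ≤ K then 1 else 0

theorem subgroupIndicator_cyclicSpan_of_mem {K : AddSubgroup V} {x : V} (h : x ∈ K) :
    subgroupIndicator K (cyclicSpan x) = 1 :=
  if_pos (AddSubgroup.zmultiples_le.mpr h)

theorem subgroupIndicator_cyclicSpan_of_notMem {K : AddSubgroup V} {x : V} (h : x ∉ K) :
    subgroupIndicator K (cyclicSpan x) = 0 :=
  if_neg (AddSubgroup.zmultiples_le.not.mpr h)

variable (V) in
/-- The integer combinations of indicator functions of cocyclic subgroups. -/
def cocyclicIndicatorSpan : AddSubgroup (CyclicSubgroup V → ℤ) :=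
  AddSubgroup.closure {F | ∃ L : AddSubgroup V, IsAddCyclic (V ⧸ L) ∧ F = subgroupIndicator L}

variable (V) in
/-- A function on cyclic subgroups, viewed as a complex function on the group. -/
def complexOfCyclicSubgroup : (CyclicSubgroup V → ℤ) →+ (V → ℂ) where
  toFun F x := F (cyclicSpan x)
  map_zero' := by ext; simp
  map_add' F F' := by ext; simp

theorem complexOfCyclicSubgroup_injective : Function.Injective (complexOfCyclicSubgroup V) := by
  intro F F' h
  ext C
  obtain ⟨x, rfl⟩ := cyclicSpan_surjective C
  exact Int.cast_injective (congrFun h x)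

variable [Finite V]

theorem natCard_quotient_nsmul_subgroupIndicator_mem (K : AddSubgroup V) :
    Nat.card (V ⧸ K) • subgroupIndicator K ∈ cocyclicIndicatorSpan V := by
  classical
  have := Fintype.ofFinite (V ⧸ K)
  rw [← AddSubgroup.mem_map_iff_mem complexOfCyclicSubgroup_injective]
  have hsum : ∑ χ : AddChar (V ⧸ K) ℂ, (fun x : V => χ x) =
      complexOfCyclicSubgroup V (Nat.card (V ⧸ K) • subgroupIndicator K) := by
    ext x
    by_cases hx : x ∈ K
    · simp [complexOfCyclicSubgroup,
        subgroupIndicator_cyclicSpan_of_mem hx, (QuotientAddGroup.eq_zero_iff x).mpr hx]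
    · simp [AddChar.sum_apply_eq_ite, complexOfCyclicSubgroup,
        subgroupIndicator_cyclicSpan_of_notMem hx, (QuotientAddGroup.eq_zero_iff x).not.mpr hx]
  rw [← hsum]
  refine sum_mem_of_forall_sum_zmultiples_mem fun χ => ?_
  let L := (χ.compAddMonoidHom (QuotientAddGroup.mk' K)).toAddMonoidHom.ker
  have hL : ∑ ψ with ψ ∈ AddSubgroup.zmultiples χ, (fun x : V => ψ x) =
      complexOfCyclicSubgroup V (Nat.card (AddSubgroup.zmultiples χ) • subgroupIndicator L) := by
    ext x
    rw [Finset.sum_apply, sum_zmultiples_addChar_apply]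
    by_cases hx : x ∈ L
    · have hx' : χ x = 1 := hx
      simp [complexOfCyclicSubgroup, subgroupIndicator_cyclicSpan_of_mem hx, hx']
    · have hx' : χ x ≠ 1 := hx
      simp [complexOfCyclicSubgroup, subgroupIndicator_cyclicSpan_of_notMem hx, hx']
  rw [hL]
  refine AddSubgroup.mem_map_of_mem _ (nsmul_mem (AddSubgroup.subset_closure ?_) _)
  exact ⟨L, isAddCyclic_quotient_ker_toAddMonoidHom _, rfl⟩

theorem natCard_nsmul_single_mem [DecidableEq (CyclicSubgroup V)] (C : CyclicSubgroup V) :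
    Nat.card V • (Pi.single C 1 : CyclicSubgroup V → ℤ) ∈ cocyclicIndicatorSpan V := by
  classical
  have := Fintype.ofFinite (CyclicSubgroup V)
  refine forall_mem_of_forall_sum_le_mem
    (g := fun C => Nat.card V • (Pi.single C 1 : CyclicSubgroup V → ℤ)) (fun D => ?_) C
  have hsum : ∑ C with C ≤ D, (Pi.single C 1 : CyclicSubgroup V → ℤ) = subgroupIndicator D.1 := by
    ext B
    simp [Pi.single_apply, subgroupIndicator]
  obtain ⟨k, hk⟩ := AddSubgroup.card_quotient_dvd_card D.1
  rw [← Finset.smul_sum, hsum, hk, mul_comm, mul_nsmul']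
  exact nsmul_mem (natCard_quotient_nsmul_subgroupIndicator_mem D.1) k

end Fourier

end CyclicSubgroups

/-! ### Homogeneous functions across an integer projection -/

namespace Hmg

variable {A H : Type*} [AddCommGroup A] [AddCommGroup H]

theorem apply_zsmul (f : Hmg 1 A H) {x : A} {n : ℤ} (h : IsCoprime n (addOrderOf x : ℤ)) :
    f.1 (n • x) = n • f.1 x := by
  simpa using f.2 x n h

theorem zsmul_apply_eq_zero (f : Hmg 1 A H) {x : A} {n : ℤ} (h : n • x = 0) :
    n • f.1 x = 0 := by
  obtain ⟨k, rfl⟩ := addOrderOf_dvd_iff_zsmul_eq_zero.mpr h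
  have hx := apply_zsmul f (x := x) (n := addOrderOf x + 1) ⟨1, -1, by ring⟩
  rw [add_zsmul, add_zsmul, natCast_zsmul, addOrderOf_nsmul_eq_zero, zero_add, one_zsmul,
    one_zsmul, right_eq_add] at hx
  rw [mul_comm, mul_zsmul, hx, smul_zero]

theorem zsmul_apply_eq_zsmul_apply (f : Hmg 1 A H) {x : A} {m n : ℤ} (h : m • x = n • x) :
    m • f.1 x = n • f.1 x := by
  rw [← sub_eq_zero, ← sub_smul] at h ⊢
  exact zsmul_apply_eq_zero f h

end Hmg

/-- Multiplication by the integer `e` is a projection of `G` onto the subgroup `P`. For finite `G`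
the subgroups arising in this way are the direct sums of Sylow subgroups. -/
structure IsProjectionOnto {G : Type*} [AddCommGroup G] (e : ℤ) (P : AddSubgroup G) : Prop where
  zsmul_mem : ∀ g, e • g ∈ P
  zsmul_eq_self : ∀ g ∈ P, e • g = g

namespace IsProjectionOnto

variable {G H : Type*} [AddCommGroup G] [AddCommGroup H] {e : ℤ} {P : AddSubgroup G}

theorem zsmul_quotient (hP : IsProjectionOnto e P) (v : G ⧸ P) : e • v = 0 := by
  obtain ⟨g, rfl⟩ := QuotientAddGroup.mk_surjective v
  exact (QuotientAddGroup.eq_zero_iff _).mpr (hP.zsmul_mem g)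

theorem zsmul_apply_self (hP : IsProjectionOnto e P) (h : Hmg 1 P H) (x : P) :
    e • h.1 x = h.1 x := by
  simpa using Hmg.zsmul_apply_eq_zsmul_apply h (m := e) (n := 1)
    (Subtype.ext (by simpa using hP.zsmul_eq_self _ x.2))

theorem zsmul_hmg (hP : IsProjectionOnto e P) (h : Hmg 1 P H) : e • h = h := by
  ext x
  exact hP.zsmul_apply_self h x

/-- The projection of `G` onto `P`. -/
def proj (hP : IsProjectionOnto e P) : G →+ P :=
  (zsmulAddGroupHom e).codRestrict P hP.zsmul_mem

/-- The section of the quotient map `G → G ⧸ P` whose image is the complement of `P` in `G`. -/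
def splitting (hP : IsProjectionOnto e P) : G ⧸ P →+ G :=
  QuotientAddGroup.lift P (zsmulAddGroupHom (1 - e)) fun g hg => by
    simp [sub_smul, hP.zsmul_eq_self g hg]

theorem coe_proj (hP : IsProjectionOnto e P) (g : G) : (hP.proj g : G) = e • g := rfl

theorem splitting_mk (hP : IsProjectionOnto e P) (g : G) : hP.splitting g = g - e • g := by
  simp [splitting, sub_smul]

theorem zsmul_splitting (hP : IsProjectionOnto e P) (v : G ⧸ P) : e • hP.splitting v = 0 := by
  rw [← map_zsmul, hP.zsmul_quotient, map_zero]

theorem mk_splitting (hP : IsProjectionOnto e P) (v : G ⧸ P) : (hP.splitting v : G ⧸ P) = v := by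
  obtain ⟨g, rfl⟩ := QuotientAddGroup.mk_surjective v
  rw [splitting_mk, QuotientAddGroup.eq_iff_sub_mem, sub_sub_cancel_left]
  exact neg_mem (hP.zsmul_mem g)

theorem mk_add_splitting (hP : IsProjectionOnto e P) (x : P) (v : G ⧸ P) :
    ((x + hP.splitting v : G) : G ⧸ P) = v := by
  rw [QuotientAddGroup.mk_add, mk_splitting, (QuotientAddGroup.eq_zero_iff _).mpr x.2, zero_add]

theorem proj_add_splitting (hP : IsProjectionOnto e P) (x : P) (v : G ⧸ P) :
    hP.proj (x + hP.splitting v) = x := by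
  ext
  rw [coe_proj, zsmul_add, zsmul_splitting, add_zero, hP.zsmul_eq_self _ x.2]

theorem zsmul_add_splitting_mk (hP : IsProjectionOnto e P) (g : G) :
    e • g + hP.splitting g = g := by
  rw [splitting_mk, add_sub_cancel]

/-- The integer `e * a + (1 - e) * b` acts as `a` on `P` and as `b` on its complement. -/
theorem zsmul_apply_zsmul_add_splitting_zsmul (hP : IsProjectionOnto e P) (f : Hmg 1 G H) {x : P}
    {v : G ⧸ P} {a b : ℤ} (ha : IsCoprime a (addOrderOf x : ℤ))
    (hb : IsCoprime b (addOrderOf v : ℤ)) :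
    e • f.1 ((a • x : P) + hP.splitting (b • v)) = a • e • f.1 (x + hP.splitting v) := by
  set m := e * a + (1 - e) * b with hm
  set y := hP.splitting v
  have hx : e • (x : G) = x := hP.zsmul_eq_self _ x.2
  have hy : e • y = 0 := hP.zsmul_splitting v
  have hmx : m • (x : G) = a • x := by
    rw [hm, add_zsmul, mul_comm e, mul_comm (1 - e), mul_zsmul, mul_zsmul, sub_smul, hx]
    simp
  have hmy : m • y = b • y := by
    rw [hm, add_zsmul, mul_comm e, mul_comm (1 - e), mul_zsmul, mul_zsmul, sub_smul, hy]
    simp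
  have hmg : m • (x + y) = (a • x : P) + hP.splitting (b • v) := by
    rw [zsmul_add, hmx, hmy, map_zsmul, AddSubgroup.coe_zsmul]
  have hcop : IsCoprime m (addOrderOf (x + y : G) : ℤ) := by
    have hdvd := (AddCommute.all (x : G) y).addOrderOf_add_dvd_mul_addOrderOf
    have hax : IsCoprime a (addOrderOf (x : G) : ℤ) := by rwa [AddSubgroup.addOrderOf_coe]
    have hby : IsCoprime b (addOrderOf y : ℤ) :=
      isCoprime_addOrderOf_map hP.splitting hb
    refine IsCoprime.of_isCoprime_of_dvd_right ?_ (Int.natCast_dvd_natCast.mpr hdvd)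
    rw [Nat.cast_mul]
    exact (isCoprime_addOrderOf_of_zsmul_eq hax hmx).mul_right
      (isCoprime_addOrderOf_of_zsmul_eq hby hmy)
  rw [← hmg, Hmg.apply_zsmul f hcop, ← mul_zsmul, ← mul_zsmul]
  refine Hmg.zsmul_apply_eq_zsmul_apply f ?_
  rw [mul_comm e m, mul_zsmul, mul_zsmul, zsmul_add, hx, hy, add_zero, hmx]

/-- The homogeneous function `x ↦ e • f (x + v)` on `P`, for `v` in the complement of `P`. -/
def restrict (hP : IsProjectionOnto e P) (v : G ⧸ P) : Hmg 1 G H →+ Hmg 1 P H :=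
  AddMonoidHom.mk' (fun f => ⟨fun x => e • f.1 (x + hP.splitting v), fun x n hn => by
    simpa using hP.zsmul_apply_zsmul_add_splitting_zsmul f hn
      (isCoprime_one_left : IsCoprime 1 (addOrderOf v : ℤ))⟩) fun f f' => by ext; simp

theorem restrict_apply (hP : IsProjectionOnto e P) (v : G ⧸ P) (f : Hmg 1 G H) (x : P) :
    (hP.restrict v f).1 x = e • f.1 (x + hP.splitting v) := rfl

theorem restrict_eq_of_cyclicSpan_eq (hP : IsProjectionOnto e P) {v w : G ⧸ P}
    (h : cyclicSpan v = cyclicSpan w) (f : Hmg 1 G H) : hP.restrict v f = hP.restrict w f := by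
  obtain ⟨n, hn, rfl⟩ := exists_zsmul_of_cyclicSpan_eq h
  ext x
  simpa [restrict_apply] using hP.zsmul_apply_zsmul_add_splitting_zsmul f
    (isCoprime_one_left : IsCoprime 1 (addOrderOf x : ℤ)) hn

/-- The product of a degree-zero function on `G ⧸ P` with a homogeneous function on `P`, as a
homogeneous function on `G`. -/
def twist (hP : IsProjectionOnto e P) :
    (CyclicSubgroup (G ⧸ P) → ℤ) →+ Hmg 1 P H →+ Hmg 1 G H :=
  AddMonoidHom.mk' (fun F => AddMonoidHom.mk' (fun h =>
    ⟨fun g => F (cyclicSpan (g : G ⧸ P)) • h.1 (hP.proj g), fun g n hn => by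
      have hmk := cyclicSpan_zsmul (isCoprime_addOrderOf_map (QuotientAddGroup.mk' P) hn)
      have hproj := h.2 _ n (isCoprime_addOrderOf_map hP.proj hn)
      simp_all [zsmul_comm _ n]⟩) fun h h' => by ext; simp) fun F F' => by ext; simp [add_smul]

theorem twist_apply (hP : IsProjectionOnto e P) (F : CyclicSubgroup (G ⧸ P) → ℤ) (h : Hmg 1 P H)
    (g : G) : (hP.twist F h).1 g = F (cyclicSpan (g : G ⧸ P)) • h.1 (hP.proj g) := rfl

theorem zsmul_twist (hP : IsProjectionOnto e P) (F : CyclicSubgroup (G ⧸ P) → ℤ)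
    (h : Hmg 1 P H) : e • hP.twist F h = hP.twist F h := by
  rw [← map_zsmul, hP.zsmul_hmg]

theorem restrict_twist (hP : IsProjectionOnto e P) (v : G ⧸ P) (F : CyclicSubgroup (G ⧸ P) → ℤ)
    (h : Hmg 1 P H) : hP.restrict v (hP.twist F h) = F (cyclicSpan v) • h := by
  ext x
  rw [restrict_apply, twist_apply, mk_add_splitting, proj_add_splitting, zsmul_comm,
    hP.zsmul_apply_self]
  rfl

theorem restrict_twist_eq_zero (hP : IsProjectionOnto e P) {e' : ℤ} {P' : AddSubgroup G}
    (hP' : IsProjectionOnto e' P') (hee' : ∀ g : G, (e * e') • g = 0) (v : G ⧸ P)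
    (F : CyclicSubgroup (G ⧸ P') → ℤ) (h : Hmg 1 P' H) :
    hP.restrict v (hP'.twist F h) = 0 := by
  have hzero : (e * e') • hP'.twist F h = 0 := by
    ext g
    exact Hmg.zsmul_apply_eq_zero _ (hee' g)
  rw [← hP.zsmul_hmg (hP.restrict v _), ← map_zsmul, ← hP'.zsmul_twist, ← mul_zsmul, hzero,
    map_zero]

open scoped Classical in
theorem sum_twist_restrict [Fintype (CyclicSubgroup (G ⧸ P))] (hP : IsProjectionOnto e P)
    (f : Hmg 1 G H) :
    ∑ C, hP.twist (Pi.single C 1) (hP.restrict C.generator f) = e • f := by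
  ext g
  rw [AddSubgroup.val_finsetSum, Finset.sum_apply,
    Finset.sum_eq_single (cyclicSpan (g : G ⧸ P))]
  · rw [twist_apply, Pi.single_eq_same, one_zsmul,
      hP.restrict_eq_of_cyclicSpan_eq (cyclicSpan_generator _), restrict_apply, coe_proj,
      zsmul_add_splitting_mk]
    rfl
  · intro C _ hC
    rw [twist_apply, Pi.single_eq_of_ne hC.symm, zero_zsmul]
  · simp

end IsProjectionOnto

/-! ### Compatibility with cocyclic functions -/

section Coc

variable {A : Type*} [AddCommGroup A]

theorem cocFun_of_mem {K : AddSubgroup A} (φ : K →+ QZ) {x : A} (h : x ∈ K) :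
    cocFun K φ x = φ ⟨x, h⟩ :=
  dif_pos h

theorem cocFun_of_notMem {K : AddSubgroup A} (φ : K →+ QZ) {x : A} (h : x ∉ K) :
    cocFun K φ x = 0 :=
  dif_neg h

theorem mem_Coc_of_coe_eq_cocFun {f : Hmg 1 A QZ} {K : AddSubgroup A} (hK : IsAddCyclic (A ⧸ K))
    {φ : K →+ QZ} (hf : f.1 = cocFun K φ) : f ∈ Coc A :=
  AddSubgroup.subset_closure ⟨K, hK, φ, hf⟩

end Coc

namespace IsProjectionOnto

variable {G : Type*} [AddCommGroup G] {e : ℤ} {P : AddSubgroup G}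

theorem add_splitting_mem_iff (hP : IsProjectionOnto e P) {K : AddSubgroup G} {x : P} {v : G ⧸ P} :
    x + hP.splitting v ∈ K ↔ (x : G) ∈ K ∧ hP.splitting v ∈ K := by
  refine ⟨fun h => ?_, fun h => add_mem h.1 h.2⟩
  have hx : (x : G) ∈ K := by
    simpa [zsmul_add, hP.zsmul_splitting, hP.zsmul_eq_self _ x.2] using K.zsmul_mem h e
  exact ⟨hx, (K.add_mem_cancel_left hx).mp h⟩

theorem Coc_le_comap_restrict (hP : IsProjectionOnto e P) (v : G ⧸ P) :
    Coc G ≤ (Coc P).comap (hP.restrict v) := by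
  refine (AddSubgroup.closure_le _).mpr ?_
  rintro f ⟨K, hK, φ, hf⟩
  let π : P →+ G ⧸ K := (QuotientAddGroup.mk' K).comp P.subtype
  have hπ (x : P) : x ∈ π.ker ↔ (x : G) ∈ K := QuotientAddGroup.eq_zero_iff (x : G)
  by_cases hv : hP.splitting v ∈ K
  · refine mem_Coc_of_coe_eq_cocFun (isAddCyclic_quotient_ker π)
      (φ := φ.comp ((P.subtype.comp π.ker.subtype).codRestrict K fun x => (hπ x).mp x.2)) ?_
    ext x
    rw [restrict_apply, hf]
    by_cases hx : (x : G) ∈ K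
    · rw [cocFun_of_mem _ (hP.add_splitting_mem_iff.mpr ⟨hx, hv⟩),
        cocFun_of_mem _ ((hπ x).mpr hx), ← map_zsmul]
      refine congrArg φ (Subtype.ext ?_)
      simp only [AddSubgroup.coe_zsmul, zsmul_add, hP.zsmul_splitting, add_zero]
      exact hP.zsmul_eq_self _ x.2
    · rw [cocFun_of_notMem _ fun h => hx (hP.add_splitting_mem_iff.mp h).1,
        cocFun_of_notMem _ fun h => hx ((hπ x).mp h), smul_zero]
  · suffices hzero : hP.restrict v f = 0 from AddSubgroup.mem_comap.mpr (hzero ▸ zero_mem _)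
    ext x
    rw [restrict_apply, hf, cocFun_of_notMem φ fun h => hv (hP.add_splitting_mem_iff.mp h).2,
      smul_zero]
    rfl

theorem coprime_natCard_quotient [Finite G] (hP : IsProjectionOnto e P) (L : AddSubgroup P)
    (K : AddSubgroup (G ⧸ P)) : (Nat.card (P ⧸ L)).Coprime (Nat.card ((G ⧸ P) ⧸ K)) := by
  have hL (a : P ⧸ L) : (1 - e) • a = 0 := by
    obtain ⟨x, rfl⟩ := QuotientAddGroup.mk_surjective a
    have hx : e • x = x := Subtype.ext (hP.zsmul_eq_self _ x.2)
    rw [sub_smul, one_zsmul, ← QuotientAddGroup.mk_zsmul, hx, sub_self]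
  have hK (b : (G ⧸ P) ⧸ K) : e • b = 0 := by
    obtain ⟨v, rfl⟩ := QuotientAddGroup.mk_surjective b
    rw [← QuotientAddGroup.mk_zsmul, hP.zsmul_quotient, QuotientAddGroup.mk_zero]
  have hcard : IsCoprime (Nat.card (P ⧸ L) : ℤ) e :=
    isCoprime_natCard_of_zsmul_eq_zero ⟨1, 1, by ring⟩ hL
  exact Nat.isCoprime_iff_coprime.mp (isCoprime_natCard_of_zsmul_eq_zero hcard.symm hK).symm

theorem Coc_le_comap_twist_subgroupIndicator [Finite G] (hP : IsProjectionOnto e P)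
    {K : AddSubgroup (G ⧸ P)} (hK : IsAddCyclic ((G ⧸ P) ⧸ K)) :
    Coc P ≤ (Coc G).comap (hP.twist (subgroupIndicator K)) := by
  refine (AddSubgroup.closure_le _).mpr ?_
  rintro h ⟨L, hL, φ, hh⟩
  let π : G →+ (P ⧸ L) × ((G ⧸ P) ⧸ K) :=
    ((QuotientAddGroup.mk' L).comp hP.proj).prod
      ((QuotientAddGroup.mk' K).comp (QuotientAddGroup.mk' P))
  have hπ (g : G) : g ∈ π.ker ↔ hP.proj g ∈ L ∧ (g : G ⧸ P) ∈ K := by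
    simp [π, AddMonoidHom.mem_ker]
  have hcyc : IsAddCyclic ((P ⧸ L) × ((G ⧸ P) ⧸ K)) :=
    AddGroup.isAddCyclic_prod_iff.mpr ⟨hL, hK, hP.coprime_natCard_quotient L K⟩
  refine mem_Coc_of_coe_eq_cocFun (isAddCyclic_quotient_ker π)
    (φ := φ.comp ((hP.proj.comp π.ker.subtype).codRestrict L fun g => ((hπ g).mp g.2).1)) ?_
  ext g
  rw [twist_apply, hh]
  by_cases hg : (g : G ⧸ P) ∈ K
  · rw [subgroupIndicator_cyclicSpan_of_mem hg, one_zsmul]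
    by_cases hgL : hP.proj g ∈ L
    · rw [cocFun_of_mem _ hgL, cocFun_of_mem _ ((hπ g).mpr ⟨hgL, hg⟩)]
      rfl
    · rw [cocFun_of_notMem _ hgL, cocFun_of_notMem _ fun h => hgL ((hπ g).mp h).1]
  · rw [subgroupIndicator_cyclicSpan_of_notMem hg, zero_zsmul,
      cocFun_of_notMem _ fun h => hg ((hπ g).mp h).2]

open scoped Classical in
theorem Coc_le_comap_twist_single [Finite G] (hP : IsProjectionOnto e P)
    (C : CyclicSubgroup (G ⧸ P)) : Coc P ≤ (Coc G).comap (hP.twist (Pi.single C 1)) := by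
  intro h hh
  have hle : cocyclicIndicatorSpan (G ⧸ P) ≤ (Coc G).comap (hP.twist.flip h) := by
    refine (AddSubgroup.closure_le _).mpr ?_
    rintro _ ⟨K, hK, rfl⟩
    exact hP.Coc_le_comap_twist_subgroupIndicator hK hh
  have hV : Nat.card (G ⧸ P) • hP.twist (Pi.single C 1) h ∈ Coc G := by
    simpa only [AddSubgroup.mem_comap, map_nsmul, AddMonoidHom.flip_apply] using
      hle (natCard_nsmul_single_mem C)
  have he : (1 - e) • hP.twist (Pi.single C 1) h ∈ Coc G := by
    rw [sub_smul, one_zsmul, hP.zsmul_twist, sub_self]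
    exact zero_mem _
  exact mem_of_isCoprime_zsmul_mem (Coc G) (isCoprime_natCard_of_zsmul_eq_zero
    (⟨1, 1, by ring⟩ : IsCoprime e (1 - e)) hP.zsmul_quotient) (by rwa [natCast_zsmul]) he

end IsProjectionOnto

/-! ### Splitting along a decomposition of the group -/

section PiQuotient

variable {M : Type*} [AddCommGroup M] {ι : Type*} [Fintype ι] {N : ι → Type*}
  [∀ i, AddCommGroup (N i)]

/-- Maps `r i : M → N i` and `s i : N i → M` presenting `M` as the direct sum of the `N i`, and
compatible with subgroups of both sides, induce an isomorphism of quotients. -/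
def quotientAddEquivPi (A : AddSubgroup M) (B : ∀ i, AddSubgroup (N i)) (r : ∀ i, M →+ N i)
    (s : ∀ i, N i →+ M) (hr : ∀ i, A ≤ (B i).comap (r i)) (hs : ∀ i, B i ≤ A.comap (s i))
    (hrr : ∀ i x, r i (s i x) = x) (hrs : ∀ i j, i ≠ j → ∀ x, r i (s j x) = 0)
    (hsr : ∀ m, ∑ i, s i (r i m) = m) : (M ⧸ A) ≃+ ∀ i, N i ⧸ B i where
  __ := AddMonoidHom.pi fun i => QuotientAddGroup.map A (B i) (r i) (hr i)
  invFun t := ∑ i, QuotientAddGroup.map (B i) A (s i) (hs i) (t i)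
  left_inv a := by
    obtain ⟨m, rfl⟩ := QuotientAddGroup.mk_surjective a
    exact (QuotientAddGroup.mk_sum ..).symm.trans (congrArg _ (hsr m))
  right_inv t := by
    ext i
    choose x hx using fun i => QuotientAddGroup.mk_surjective (t i)
    obtain rfl : (fun i => (x i : N i ⧸ B i)) = t := funext hx
    have hi : r i (∑ j, s j (x j)) = x i := by
      rw [map_sum, Finset.sum_eq_single i (fun j _ hj => hrs i j hj.symm _) (by simp), hrr]
    exact (congrArg (QuotientAddGroup.map A (B i) (r i) (hr i))
      (QuotientAddGroup.mk_sum ..).symm).trans (congrArg _ hi)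

/-- A finite product over a dependent sum, as a direct sum of powers. -/
def piSigmaAddEquivDirectSum {β : ι → Type*} [∀ i, Finite (β i)] :
    (∀ c : (Σ i, β i), N c.1) ≃+ ⨁ i, (Fin (Nat.card (β i)) → N i) :=
  (LinearEquiv.piCurry ℤ fun i (_ : β i) => N i).toAddEquiv.trans <|
    (AddEquiv.piCongrRight fun i =>
      AddEquiv.arrowCongr (Finite.equivFin (β i)) (AddEquiv.refl (N i))).trans
    (DirectSum.addEquivProd _).symm

end PiQuotient

section Decomposition

variable {G : Type*} [AddCommGroup G] {ι : Type*} {e : ι → ℤ} {P : ι → AddSubgroup G}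

theorem mul_zsmul_eq_zero_of_disjoint (hmem : ∀ i g, e i • g ∈ P i) {i j : ι}
    (hij : Disjoint (P i) (P j)) (g : G) : (e i * e j) • g = 0 :=
  AddSubgroup.disjoint_def.mp hij (by rw [mul_zsmul]; exact hmem i _)
    (by rw [mul_comm, mul_zsmul]; exact hmem j _)

variable [Fintype ι]

theorem isProjectionOnto_of_pairwise_disjoint (hdisj : Pairwise (Function.onFun Disjoint P))
    (hmem : ∀ i g, e i • g ∈ P i) (hsum : ∀ g : G, (∑ i, e i) • g = g) (i : ι) :
    IsProjectionOnto (e i) (P i) := by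
  refine ⟨hmem i, fun g hg => ?_⟩
  have hzero : ∀ j, j ≠ i → e j • g = 0 := fun j hj =>
    AddSubgroup.disjoint_def.mp (hdisj hj) (hmem j g) ((P i).zsmul_mem hg (e j))
  have hsingle : ∑ j, e j • g = e i • g :=
    Finset.sum_eq_single i (fun j _ hj => hzero j hj) fun h => absurd (Finset.mem_univ i) h
  rw [← hsingle, ← Finset.sum_smul, hsum]

/-- `Hmg(G)/Coc(G)` splits along a decomposition of `G` into subgroups `P i` with projections given
by integers `e i`, into one copy of `Hmg(P i)/Coc(P i)` for each cyclic subgroup of `G ⧸ P i`. -/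
def hmgQuotientCocAddEquivPi [Finite G] (hdisj : Pairwise (Function.onFun Disjoint P))
    (hmem : ∀ i g, e i • g ∈ P i) (hsum : ∀ g : G, (∑ i, e i) • g = g) :
    (Hmg 1 G QZ ⧸ Coc G) ≃+
      ∀ c : (Σ i, CyclicSubgroup (G ⧸ P i)), Hmg 1 (P c.1) QZ ⧸ Coc (P c.1) := by
  have hP := isProjectionOnto_of_pairwise_disjoint hdisj hmem hsum
  classical
  have (i : ι) := Fintype.ofFinite (CyclicSubgroup (G ⧸ P i))
  refine quotientAddEquivPi (Coc G) _ (fun c => (hP c.1).restrict c.2.generator)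
    (fun c => (hP c.1).twist (Pi.single c.2 1)) (fun c => (hP c.1).Coc_le_comap_restrict _)
    (fun c => (hP c.1).Coc_le_comap_twist_single _) ?_ ?_ ?_
  · intro c h
    rw [IsProjectionOnto.restrict_twist, cyclicSpan_generator, Pi.single_eq_same, one_zsmul]
  · rintro ⟨i, C⟩ ⟨j, D⟩ hne h
    by_cases hij : i = j
    · subst hij
      have hCD : C ≠ D := fun hCD => hne (congrArg _ hCD)
      rw [IsProjectionOnto.restrict_twist, cyclicSpan_generator, Pi.single_eq_of_ne hCD, zero_zsmul]
    · exact (hP i).restrict_twist_eq_zero (hP j)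
        (mul_zsmul_eq_zero_of_disjoint hmem (hdisj hij)) _ _ _
  · intro f
    rw [Fintype.sum_sigma, Finset.sum_congr rfl fun i _ => (hP i).sum_twist_restrict f,
      ← Finset.sum_smul]
    ext g
    simpa using Hmg.zsmul_apply_eq_zsmul_apply f (n := 1) (by simpa using hsum g)

end Decomposition

/-! ### Primary parts -/

section PrimaryParts

variable {G : Type*} [AddCommGroup G]

theorem disjoint_primaryPart {p q : ℕ} (h : p.Coprime q) :
    Disjoint (primaryPart p G) (primaryPart q G) := by
  refine AddSubgroup.disjoint_def.mpr ?_
  rintro x ⟨m, hm⟩ ⟨n, hn⟩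
  rw [← AddSubgroup.mem_bot]
  refine mem_of_isCoprime_zsmul_mem ⊥
    (Nat.isCoprime_iff_coprime.mpr (Nat.Coprime.pow m n h)) ?_ ?_
  · rwa [natCast_zsmul]
  · rwa [natCast_zsmul]

theorem exists_sum_zsmul_mem_primaryPart {n : ℕ} (hn : n ≠ 0) (hG : ∀ g : G, n • g = 0) :
    ∃ e : ℕ → ℤ, (∀ g : G, (∑ p ∈ n.primeFactors, e p) • g = g) ∧
      ∀ p ∈ n.primeFactors, ∀ g : G, e p • g ∈ primaryPart p G := by
  obtain hempty | hne := n.primeFactors.eq_empty_or_nonempty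
  · obtain rfl : n = 1 := (Nat.primeFactors_eq_empty.mp hempty).resolve_left hn
    exact ⟨0, fun g => by simpa using (hG g).symm, by simp⟩
  have hcop : Pairwise (Function.onFun IsCoprime
      fun p : n.primeFactors => ((p : ℕ) : ℤ) ^ n.factorization p) := fun p q hpq => by
    rw [Function.onFun, ← Nat.cast_pow, ← Nat.cast_pow, Nat.isCoprime_iff_coprime]
    exact Nat.coprime_pow_primes _ _ (Nat.prime_of_mem_primeFactors p.2)
      (Nat.prime_of_mem_primeFactors q.2) (Subtype.coe_injective.ne hpq)
  obtain ⟨μ, hμ⟩ := (exists_sum_eq_one_iff_pairwise_coprime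
    (s := fun p : ℕ => (p : ℤ) ^ n.factorization p) hne).mpr hcop
  refine ⟨_, fun g => by rw [hμ, one_zsmul], fun p hp g => ⟨n.factorization p, ?_⟩⟩
  have hprod : (p : ℤ) ^ n.factorization p *
      ∏ q ∈ n.primeFactors \ {p}, (q : ℤ) ^ n.factorization q = n := by
    rw [← Finset.prod_eq_mul_prod_sdiff_singleton_of_mem hp
      fun q : ℕ => (q : ℤ) ^ n.factorization q]
    exact_mod_cast Nat.prod_factorization_pow_eq_self hn
  rw [← natCast_zsmul, ← mul_zsmul, Nat.cast_pow, mul_left_comm, hprod, mul_zsmul, natCast_zsmul,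
    hG, smul_zero]

end PrimaryParts

theorem stmt18 (G : Type*) [AddCommGroup G] [Finite G] :
    Nonempty ((↥(Hmg 1 G QZ) ⧸ Coc G) ≃+
      ⨁ p : {p : ℕ // p.Prime ∧ p ∣ Nat.card G},
        (Fin (numCyclic (G ⧸ primaryPart p.1 G)) →
          (↥(Hmg 1 (primaryPart p.1 G) QZ) ⧸ Coc (primaryPart p.1 G)))) := by
  have hcard : Nat.card G ≠ 0 := Nat.card_pos.ne'
  have hprimes (p : ℕ) : p ∈ (Nat.card G).primeFactors ↔ p.Prime ∧ p ∣ Nat.card G :=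
    Nat.mem_primeFactors_of_ne_zero hcard
  let _ : Fintype {p : ℕ // p.Prime ∧ p ∣ Nat.card G} := Fintype.subtype _ hprimes
  obtain ⟨e, hsum, hmem⟩ :=
    exists_sum_zsmul_mem_primaryPart hcard fun g : G => card_nsmul_eq_zero'
  have hdisj : Pairwise (Function.onFun Disjoint
      fun p : {p : ℕ // p.Prime ∧ p ∣ Nat.card G} => primaryPart p.1 G) := fun p q hpq =>
    disjoint_primaryPart ((Nat.coprime_primes p.2.1 q.2.1).mpr (Subtype.coe_injective.ne hpq))
  have hsum' (g : G) : (∑ p : {p : ℕ // p.Prime ∧ p ∣ Nat.card G}, e p) • g = g := by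
    rw [← Finset.sum_subtype _ hprimes e, hsum]
  let splitEquiv := hmgQuotientCocAddEquivPi hdisj (fun p => hmem p ((hprimes p).mpr p.2)) hsum'
  let regroupEquiv := piSigmaAddEquivDirectSum
    (ι := {p : ℕ // p.Prime ∧ p ∣ Nat.card G})
    (β := fun p => CyclicSubgroup (G ⧸ primaryPart p.1 G))
    (N := fun p => Hmg 1 (primaryPart p.1 G) QZ ⧸ Coc (primaryPart p.1 G))
  exact ⟨splitEquiv.trans regroupEquiv⟩

end
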